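/- Let X be a compact metric space, for each t ≥ 0 let β_t be a Borel probability measure on X and δ_t : X → 𝒫(X) a measurable map, and let Γ be a nonempty closed convex subset of 𝒫(X). Suppose that for every open neighborhood U of Γ in 𝒫(X) one has ν_t(U) → 1 as t → +∞. Then every weak limit of the measures μ_t (i.e., every limit in 𝒫(X) of a sequence μ_{t_n} with t_n → +∞) belongs to Γ. -/

import Mathlib

open MeasureTheory Filter Topology ENNReal NNReal

/-- A subset `Γ` of the space of (Borel) probability measures is convex:
it is closed under forming convex combinations `a • μ + (1 - a) • ν`. -/
def ConvexPMSet {X : Type*} [MeasurableSpace X]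
    (Γ : Set (ProbabilityMeasure X)) : Prop :=
  ∀ μ ν : ProbabilityMeasure X, μ ∈ Γ → ν ∈ Γ →
    ∀ a : NNReal, a ≤ 1 → ∀ σ : ProbabilityMeasure X,
      (σ : Measure X) = (a : ℝ≥0∞) • (μ : Measure X) + ((1 - a : NNReal) : ℝ≥0∞) • (ν : Measure X) →
      σ ∈ Γ

section
open BoundedContinuousFunction

theorem real_separation {X : Type*} [MetricSpace X] [MeasurableSpace X] [BorelSpace X]
    (Γ : Set (ProbabilityMeasure X)) (hΓcl : IsClosed Γ) (hΓconv : ConvexPMSet Γ)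
    (m : ProbabilityMeasure X) (hm : m ∉ Γ) :
    ∃ (f : X →ᵇ ℝ) (u : ℝ), ∫ x, f x ∂(m : Measure X) < u ∧
      ∀ γ ∈ Γ, u < ∫ x, f x ∂(γ : Measure X) := by
  classical
  let L : ProbabilityMeasure X → (X →ᵇ ℝ) → ℝ := fun p f => ∫ x, f x ∂(p : Measure X)
  have hcomap : comap L (𝓝 (L m)) ≤ 𝓝 m := by
    have : Tendsto id (comap L (𝓝 (L m))) (𝓝 m) := by
      rw [ProbabilityMeasure.tendsto_iff_forall_integral_tendsto]
      intro f
      exact (tendsto_pi_nhds.1 (tendsto_comap (f := L) (x := 𝓝 (L m)))) f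
    exact this
  have hmem : Γᶜ ∈ comap L (𝓝 (L m)) := hcomap (hΓcl.isOpen_compl.mem_nhds hm)
  obtain ⟨V, hV, hVΓ⟩ := mem_comap.1 hmem
  rw [nhds_pi, Filter.mem_pi] at hV
  obtain ⟨I, hI, t, ht, htV⟩ := hV
  have := hI.fintype
  let T : ProbabilityMeasure X → I → ℝ := fun p i => L p i
  have hconv : Convex ℝ (T '' Γ) := by
    rintro _ ⟨p, hp, rfl⟩ _ ⟨q, hq, rfl⟩ a b ha hb hab
    lift a to ℝ≥0 using ha
    lift b to ℝ≥0 using hb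
    have hab' : a + b = 1 := by exact_mod_cast hab
    have ha1 : a ≤ 1 := hab' ▸ le_self_add
    have hb' : 1 - a = b := by rw [← hab']; simp
    have hprob : IsProbabilityMeasure
        ((a : ℝ≥0∞) • (p : Measure X) + (b : ℝ≥0∞) • (q : Measure X)) := by
      constructor
      simp
      exact_mod_cast hab'
    refine ⟨⟨_, hprob⟩, hΓconv p q hp hq a ha1 _ (by rw [hb']; rfl), ?_⟩
    ext i
    change ∫ x, i.1 x ∂((a : ℝ≥0∞) • (p : Measure X) + (b : ℝ≥0∞) • (q : Measure X)) = _
    rw [integral_add_measure ((i.1.integrable _).smul_measure (by simp))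
      ((i.1.integrable _).smul_measure (by simp)), integral_smul_measure, integral_smul_measure]
    simp [T, L]
  have hnot : T m ∉ closure (T '' Γ) := by
    intro hc
    have hn : Set.pi Set.univ (fun i : I => t i) ∈ 𝓝 (T m) :=
      set_pi_mem_nhds Set.finite_univ (fun i _ => ht i)
    obtain ⟨_, hy, p, hp, rfl⟩ := mem_closure_iff_nhds.1 hc _ hn
    exact hVΓ (a := p) (htV (fun i hi => hy ⟨i, hi⟩ trivial)) hp
  obtain ⟨φ, u, h1, h2⟩ := geometric_hahn_banach_point_closed hconv.closure isClosed_closure hnot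
  have key : ∀ p, φ (T p) =
      ∫ x, (∑ i : I, φ (Pi.single i 1) • i.1 : X →ᵇ ℝ) x ∂(p : Measure X) := by
    intro p
    have e : T p = ∑ i : I, T p i • (Pi.single i 1 : I → ℝ) := by
      ext j
      simp [Finset.sum_apply, Pi.single_apply]
    rw [e, map_sum]
    simp only [BoundedContinuousFunction.coe_sum, Finset.sum_apply,
      BoundedContinuousFunction.coe_smul, map_smul, smul_eq_mul]
    rw [integral_finsetSum _ (fun i _ => (i.1.integrable _).const_mul _)]
    refine Finset.sum_congr rfl fun i _ => ?_
    rw [integral_const_mul, mul_comm]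
  refine ⟨_, u, (key m) ▸ h1, fun γ hγ => ?_⟩
  rw [← key]
  exact h2 _ (subset_closure ⟨γ, hγ, rfl⟩)

theorem nn_separation {X : Type*} [MetricSpace X] [MeasurableSpace X] [BorelSpace X]
    (Γ : Set (ProbabilityMeasure X)) (hΓcl : IsClosed Γ) (hΓconv : ConvexPMSet Γ)
    (m : ProbabilityMeasure X) (hm : m ∉ Γ) :
    ∃ (f : X →ᵇ ℝ≥0) (u : ℝ≥0), ∫⁻ x, f x ∂(m : Measure X) < u ∧
      ∀ γ ∈ Γ, u < ∫⁻ x, f x ∂(γ : Measure X) := by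
  obtain ⟨f, u, h1, h2⟩ := real_separation Γ hΓcl hΓconv m hm
  let g : X →ᵇ ℝ := f + BoundedContinuousFunction.const X ‖f‖
  have hg0 : ∀ x, 0 ≤ g x := fun x => by
    have := (abs_le.1 (f.norm_coe_le_norm x)).1
    simp [g]; linarith
  have hg : ∀ p : ProbabilityMeasure X, ∫⁻ x, g.nnrealPart x ∂(p : Measure X) =
      ENNReal.ofReal (∫ x, f x ∂(p : Measure X) + ‖f‖) := by
    intro p
    have : ∫ x, f x ∂(p : Measure X) + ‖f‖ = ∫ x, g x ∂(p : Measure X) := by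
      simp only [g, BoundedContinuousFunction.coe_add, Pi.add_apply,
        BoundedContinuousFunction.const_apply]
      rw [integral_add (f.integrable _) (integrable_const _)]
      simp
    rw [this, ofReal_integral_eq_lintegral_ofReal (g.integrable _) (ae_of_all _ hg0)]
    rfl
  have h0 : 0 ≤ ∫ x, f x ∂(m : Measure X) + ‖f‖ := by
    have : ‖∫ x, f x ∂(m : Measure X)‖ ≤ ‖f‖ := f.norm_integral_le_norm _
    have := (abs_le.1 this).1
    linarith
  refine ⟨g.nnrealPart, (u + ‖f‖).toNNReal, ?_, fun γ hγ => ?_⟩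
  · rw [hg]
    exact (ENNReal.ofReal_lt_ofReal_iff (by linarith)).2 (by linarith)
  · rw [hg]
    have := h2 γ hγ
    exact (ENNReal.ofReal_lt_ofReal_iff (by linarith)).2 (by linarith)

end

/-- Let `X` be a compact metric space, `β t` Borel probability measures on
`X`, `δ t : X → 𝒫(X)` measurable maps, and `Γ ⊆ 𝒫(X)` nonempty, closed and convex.
If for every open neighborhood `U` of `Γ` the laws `ν t := β t ∘ (δ t)⁻¹` satisfy
`ν t (U) → 1` as `t → ∞`, then every weak limit of the expectations
`μ t := ∫ δ t x dβ t (x)` along a sequence of times tending to `∞` belongs to `Γ`. -/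
theorem weak_limits_in_Gamma
    {X : Type*} [MetricSpace X] [CompactSpace X] [MeasurableSpace X] [BorelSpace X]
    [MeasurableSpace (ProbabilityMeasure X)] [BorelSpace (ProbabilityMeasure X)]
    (β : ℝ → ProbabilityMeasure X)
    (δ : ℝ → X → ProbabilityMeasure X)
    (hδ : ∀ t : ℝ, 0 ≤ t → Measurable (δ t))
    (μ : ℝ → ProbabilityMeasure X)
    (hμ : ∀ t : ℝ, 0 ≤ t →
      (μ t : Measure X) = (β t : Measure X).bind (fun x => (δ t x : Measure X)))
    (Γ : Set (ProbabilityMeasure X)) (hΓne : Γ.Nonempty) (hΓcl : IsClosed Γ)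
    (hΓconv : ConvexPMSet Γ)
    (hν : ∀ U : Set (ProbabilityMeasure X), IsOpen U → Γ ⊆ U →
      Tendsto (fun t : ℝ => ((β t : Measure X).map (δ t)) U) atTop (𝓝 1))
    (tn : ℕ → ℝ) (htn0 : ∀ n, 0 ≤ tn n) (htn : Tendsto tn atTop atTop)
    (μlim : ProbabilityMeasure X)
    (hlim : Tendsto (fun n => μ (tn n)) atTop (𝓝 μlim)) :
    μlim ∈ Γ := by
  by_contra hm
  obtain ⟨f, u, h1, h2⟩ := nn_separation Γ hΓcl hΓconv μlim hm
  have hcont := ProbabilityMeasure.continuous_lintegral_boundedContinuousFunction (X := X) f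
  let U : Set (ProbabilityMeasure X) := {γ | (u : ℝ≥0∞) < ∫⁻ x, f x ∂(γ : Measure X)}
  have hU : IsOpen U := isOpen_lt continuous_const hcont
  have hlimU := ENNReal.Tendsto.const_mul (a := (u : ℝ≥0∞)) ((hν U hU h2).comp htn)
    (Or.inl one_ne_zero)
  have hlimf := (hcont.tendsto μlim).comp hlim
  refine absurd (le_of_tendsto_of_tendsto' hlimU hlimf fun n => ?_) (by simpa using h1)
  simp only [Function.comp]
  have ht := htn0 n
  have hne : (β (tn n) : Measure X).map (fun x => (δ (tn n) x : Measure X)) ≠ 0 := by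
    intro h0
    have h := hμ _ ht
    rw [Measure.bind, h0, Measure.join_zero] at h
    exact (IsProbabilityMeasure.ne_zero (μ (tn n) : Measure X)) h
  rw [hμ _ ht, Measure.lintegral_bind (AEMeasurable.of_map_ne_zero hne)
    (f.continuous.measurable.coe_nnreal_ennreal.aemeasurable),
    Measure.map_apply (hδ _ ht) hU.measurableSet]
  refine le_trans ?_ (mul_meas_ge_le_lintegral (hcont.measurable.comp (hδ _ ht)) u)
  gcongr
  intro x hx
  exact le_of_lt (show (u : ℝ≥0∞) < ∫⁻ y, f y ∂(δ (tn n) x : Measure X) from hx)
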